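/- Let q = r^2 with r an odd prime power. Suppose q − 1 = e_1 f_1 = e_2 f_2, there exists an integer l ≥ 2 with e_1 ≡ 2^l (mod 2^{l+1}) and 2^l | e_2, and that 2e_2 | e_1(r−1) and e_1 | e_2(r+1). Let s, t be integers with 1 ≤ s ≤ D_1, 1 ≤ t ≤ D_2 and 4 | (s−1)(r+1), and set n_1 = s·f_1 + t·f_2. If n_1 is even, then for every integer k with 1 ≤ k ≤ n_1/2 − 1 there exists an [n_1, k] MDS self-orthogonal code over F_q, i.e., a linear code C ⊆ F_q^{n_1} with dim C = k, C ⊆ C⊥, and minimum Hamming distance n_1 − k + 1. -/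

import Mathlib

/-- The Euclidean dual of a linear code `C ⊆ F^n`. -/
def dualCode {F : Type*} [Field F] {n : ℕ} (C : Submodule F (Fin n → F)) :
    Submodule F (Fin n → F) where
  carrier := {x | ∀ c ∈ C, ∑ i, x i * c i = 0}
  add_mem' := by
    intro a b ha hb c hc
    simp only [Set.mem_setOf_eq] at ha hb ⊢
    simp [Pi.add_apply, add_mul, Finset.sum_add_distrib, ha c hc, hb c hc]
  zero_mem' := by intro c hc; simp
  smul_mem' := by
    intro r a ha c hc
    simp only [Set.mem_setOf_eq] at ha ⊢
    simp [Pi.smul_apply, smul_eq_mul, mul_assoc, ← Finset.mul_sum, ha c hc]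

/-- `C` has minimum Hamming distance `d`. -/
def IsMinDist {F : Type*} [Field F] [DecidableEq F] {n : ℕ}
    (C : Submodule F (Fin n → F)) (d : ℕ) : Prop :=
  (∀ c ∈ C, c ≠ 0 → d ≤ hammingNorm c) ∧ ∃ c ∈ C, c ≠ 0 ∧ hammingNorm c = d

/-!
Write `r = 2m + 1`. The hypotheses say that `f₁ = D₂ g` and `f₂ = D₁ g`, where `D₁` is odd,
`D₁ ∣ m + 1`, `D₂ ∣ m` and `D₁ D₂ g ∣ m (m + 1) = (q - 1) / 4`. Choose a set `U` of `s` solutions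
of `u ^ D₁ = 1` and a set `T` of `t` solutions of `v ^ D₂ = -1`. The polynomial
`P = ∏ (X ^ f₁ - u) * ∏ (X ^ f₂ - v)` divides `X ^ (2 D₁ D₂ g) - 1`, so it has `s f₁ + t f₂`
distinct roots `aᵢ` in `F`. If every `P'(aᵢ)` is a square, multipliers with `vᵢ² = 1 / P'(aᵢ)` give
a generalized Reed–Solomon code, which is self-orthogonal because `∑ h(aᵢ) / P'(aᵢ)` is the
coefficient of `X ^ (n - 1)` in `h` when `deg h < n`.

Up to squares, `P'(aᵢ)` is a product of differences. Elements fixed by the automorphism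
`z ↦ z ^ r` are squares, and so are their differences. If `z ^ (m + 1) = w ^ (m + 1) = 1`, then
`z + w` is a square, whereas `z - w` has quadratic character `(-1) ^ (m + 1)` for `z ≠ w`; such
differences occur `s - 1` at a time, and `(m + 1) (s - 1)` is even because `4 ∣ (s - 1) (r + 1)`.
-/

open Polynomial

/-- There is an `[n, k]` MDS self-orthogonal code over `F`. -/
def HasMDSSelfOrthogonalCode (F : Type*) [Field F] [DecidableEq F] (n k : ℕ) : Prop :=
  ∃ C : Submodule F (Fin n → F),
    Module.finrank F C = k ∧ C ≤ dualCode C ∧ IsMinDist C (n - k + 1)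

section GeneralizedReedSolomon

variable {F ι : Type*} [Field F]

/-- The evaluation map `f ↦ (v i * f (a i))ᵢ` of generalized Reed–Solomon codes, with nodes `a`
and column multipliers `v`. -/
noncomputable def grsEval (a v : ι → F) : F[X] →ₗ[F] ι → F :=
  LinearMap.pi fun i => v i • leval (a i)

/-- The generalized Reed–Solomon code with nodes `a` and column multipliers `v`: the weighted
evaluations of the polynomials of degree less than `k`. -/
noncomputable def grsCode (a v : ι → F) (k : ℕ) : Submodule F (ι → F) :=
  (degreeLT F k).map (grsEval a v)

theorem grsEval_apply (a v : ι → F) (f : F[X]) (i : ι) :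
    grsEval a v f i = v i * f.eval (a i) := rfl

section Fintype

variable [Fintype ι] {a v : ι → F}

theorem card_lt_hammingNorm_grsEval_add [DecidableEq F] (ha : Function.Injective a)
    (hv : ∀ i, v i ≠ 0) {k : ℕ} {f : F[X]} (hf : f ∈ degreeLT F k) (hf0 : f ≠ 0) :
    Fintype.card ι < hammingNorm (grsEval a v f) + k := by
  by_contra! hle
  let zeros : Finset ι := {i | grsEval a v f i = 0}
  have hcard : zeros.card + hammingNorm (grsEval a v f) = Fintype.card ι :=
    Finset.card_filter_add_card_filter_not _
  refine hf0 (eq_zero_of_degree_lt_of_eval_index_eq_zero zeros ha.injOn ?_ fun i hi => ?_)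
  · exact (mem_degreeLT.1 hf).trans_le (by exact_mod_cast (by lia : k ≤ zeros.card))
  · simpa [zeros, grsEval_apply, hv i] using hi

theorem finrank_grsCode (ha : Function.Injective a) (hv : ∀ i, v i ≠ 0) {k : ℕ}
    (hk : k ≤ Fintype.card ι) : Module.finrank F (grsCode a v k) = k := by
  classical
  have hinj : Function.Injective ((grsEval a v).domRestrict (degreeLT F k)) := by
    refine (injective_iff_map_eq_zero _).2 fun f hf => ?_
    by_contra hne
    have hlt := card_lt_hammingNorm_grsEval_add ha hv f.2 (by simpa using hne)
    rw [show grsEval a v f = 0 from hf, hammingNorm_zero] at hlt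
    lia
  rw [grsCode, ← LinearMap.range_domRestrict, LinearMap.finrank_range_of_inj hinj,
    (degreeLTEquiv F k).finrank_eq, Module.finrank_fin_fun]

theorem hammingNorm_grsEval_nodal_le [DecidableEq F] (T : Finset ι) :
    hammingNorm (grsEval a v (Lagrange.nodal T a)) ≤ Fintype.card ι - T.card := by
  classical
  rw [← Finset.card_compl]
  refine Finset.card_le_card fun i hi => Finset.mem_compl.2 fun hiT => ?_
  rw [Finset.mem_filter, grsEval_apply, Lagrange.eval_nodal_at_node hiT, mul_zero] at hi
  exact hi.2 rfl

theorem sum_nodalWeight_mul_eval_eq_zero [DecidableEq ι] (ha : Function.Injective a) {f : F[X]}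
    (hf : f.degree < (Fintype.card ι - 1 : ℕ)) :
    ∑ i, Lagrange.nodalWeight Finset.univ a i * f.eval (a i) = 0 := by
  have hlt : f.degree < (Finset.univ : Finset ι).card :=
    hf.trans_le (by exact_mod_cast Nat.sub_le _ _)
  have hcoeff := Lagrange.coeff_eq_sum ha.injOn hlt
  rw [Finset.card_univ, coeff_eq_zero_of_degree_lt hf] at hcoeff
  rw [hcoeff]
  exact Finset.sum_congr rfl fun i _ => by
    rw [Lagrange.nodalWeight, Finset.prod_inv_distrib, div_eq_inv_mul]

end Fintype

variable {n k : ℕ} {a v : Fin n → F}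

theorem isMinDist_grsCode [DecidableEq F] (ha : Function.Injective a) (hv : ∀ i, v i ≠ 0)
    (hk : 1 ≤ k) (hkn : k ≤ n) : IsMinDist (grsCode a v k) (n - k + 1) := by
  refine ⟨?_, ?_⟩
  · rintro _ ⟨f, hf, rfl⟩ hne
    have hf0 : f ≠ 0 := fun h => hne (by rw [h, map_zero])
    have hlt := card_lt_hammingNorm_grsEval_add ha hv hf hf0
    rw [Fintype.card_fin] at hlt
    lia
  · obtain ⟨T, -, hT⟩ : ∃ T ⊆ (Finset.univ : Finset (Fin n)), T.card = k - 1 :=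
      Finset.exists_subset_card_eq (by rw [Finset.card_fin]; lia)
    have hmem : Lagrange.nodal T a ∈ degreeLT F k := by
      rw [mem_degreeLT, Lagrange.degree_nodal, hT]
      exact_mod_cast Nat.sub_lt hk one_pos
    have hge := card_lt_hammingNorm_grsEval_add ha hv hmem Lagrange.nodal_ne_zero
    have hle := hammingNorm_grsEval_nodal_le (a := a) (v := v) T
    rw [Fintype.card_fin] at hge hle
    exact ⟨_, Submodule.mem_map_of_mem hmem, hammingNorm_pos_iff.1 (by lia), by lia⟩

theorem grsCode_le_dualCode (ha : Function.Injective a)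
    (hv : ∀ i, Lagrange.nodalWeight Finset.univ a i = v i * v i) (hk : 2 * k ≤ n) :
    grsCode a v k ≤ dualCode (grsCode a v k) := by
  rintro _ ⟨f, hf, rfl⟩ _ ⟨g, hg, rfl⟩
  have hdeg : (f * g).degree < (Fintype.card (Fin n) - 1 : ℕ) := by
    rcases eq_or_ne f 0 with rfl | hf0
    · simp
    rcases eq_or_ne g 0 with rfl | hg0
    · simp
    have hf' := (natDegree_lt_iff_degree_lt hf0).2 (mem_degreeLT.1 hf)
    have hg' := (natDegree_lt_iff_degree_lt hg0).2 (mem_degreeLT.1 hg)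
    rw [← natDegree_lt_iff_degree_lt (mul_ne_zero hf0 hg0), natDegree_mul hf0 hg0,
      Fintype.card_fin]
    lia
  rw [← sum_nodalWeight_mul_eval_eq_zero ha hdeg]
  refine Finset.sum_congr rfl fun i _ => ?_
  rw [hv, grsEval_apply, grsEval_apply, eval_mul]
  ring

theorem hasMDSSelfOrthogonalCode_of_isSquare_eval_derivative_nodal [DecidableEq F]
    (S : Finset F) (hS : ∀ x ∈ S, IsSquare ((derivative (Lagrange.nodal S id)).eval x))
    (hk : 1 ≤ k) (hkS : 2 * k ≤ S.card) : HasMDSSelfOrthogonalCode F S.card k := by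
  let a : Fin S.card → F := fun i => S.equivFin.symm i
  have ha : Function.Injective a := Subtype.val_injective.comp S.equivFin.symm.injective
  have hnodal : Lagrange.nodal Finset.univ a = Lagrange.nodal S id := by
    rw [Lagrange.nodal_eq, Lagrange.nodal_eq, ← Finset.prod_coe_sort S]
    exact Equiv.prod_comp S.equivFin.symm fun x : S => X - C (x : F)
  have hsq : ∀ i, IsSquare (Lagrange.nodalWeight Finset.univ a i) := fun i => by
    rw [Lagrange.nodalWeight_eq_eval_derivative_nodal (Finset.mem_univ i), hnodal]
    exact (hS _ (S.equivFin.symm i).2).inv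
  choose v hv using hsq
  have hv0 : ∀ i, v i ≠ 0 := fun i h =>
    Lagrange.nodalWeight_ne_zero ha.injOn (Finset.mem_univ i) (by rw [hv, h, mul_zero])
  have hkn : k ≤ S.card := by lia
  exact ⟨grsCode a v k, finrank_grsCode ha hv0 (by rwa [Fintype.card_fin]),
    grsCode_le_dualCode ha hv hkS, isMinDist_grsCode ha hv0 hk hkn⟩

end GeneralizedReedSolomon

section RootsInFiniteField

variable {F : Type*} [Field F] [Fintype F]

theorem X_pow_sub_one_dvd_X_pow_card_sub_X {d : ℕ} (hd : d ∣ Fintype.card F - 1) :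
    (X ^ d - 1 : F[X]) ∣ X ^ Fintype.card F - X := by
  obtain ⟨e, he⟩ := hd
  have hcard : Fintype.card F = d * e + 1 := by
    have := Fintype.card_pos (α := F)
    lia
  have hfactor : (X ^ Fintype.card F - X : F[X]) = X * ((X ^ d) ^ e - 1 ^ e) := by
    rw [hcard, ← pow_mul]
    ring
  exact hfactor ▸ (sub_dvd_pow_sub_pow _ _ _).mul_left _

variable {P : F[X]}

theorem splits_of_dvd_X_pow_card_sub_X (hP : P ∣ X ^ Fintype.card F - X) : P.Splits := by
  refine Splits.of_dvd ?_ (FiniteField.X_pow_card_sub_X_ne_zero F Fintype.one_lt_card) hP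
  rw [splits_iff_card_roots, FiniteField.roots_X_pow_card_sub_X,
    FiniteField.X_pow_card_sub_X_natDegree_eq F Fintype.one_lt_card]
  rfl

theorem nodup_roots_of_dvd_X_pow_card_sub_X (hP : P ∣ X ^ Fintype.card F - X) :
    P.roots.Nodup := by
  have hle := roots.le_of_dvd (FiniteField.X_pow_card_sub_X_ne_zero F Fintype.one_lt_card) hP
  rw [FiniteField.roots_X_pow_card_sub_X] at hle
  exact Multiset.nodup_of_le hle Finset.univ.nodup

theorem card_toFinset_roots_of_dvd_X_pow_card_sub_X [DecidableEq F]
    (hP : P ∣ X ^ Fintype.card F - X) :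
    P.roots.toFinset.card = P.natDegree := by
  rw [Multiset.toFinset_card_of_nodup (nodup_roots_of_dvd_X_pow_card_sub_X hP),
    splits_iff_card_roots.1 (splits_of_dvd_X_pow_card_sub_X hP)]

theorem nodal_toFinset_roots_of_dvd_X_pow_card_sub_X [DecidableEq F] (hmonic : P.Monic)
    (hP : P ∣ X ^ Fintype.card F - X) : Lagrange.nodal P.roots.toFinset id = P := by
  rw [Lagrange.nodal_eq, Finset.prod_eq_multiset_prod, Multiset.toFinset_val,
    (nodup_roots_of_dvd_X_pow_card_sub_X hP).dedup]
  exact ((splits_of_dvd_X_pow_card_sub_X hP).eq_prod_roots_of_monic hmonic).symm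

theorem hasMDSSelfOrthogonalCode_of_isSquare_eval_derivative [DecidableEq F] {k : ℕ}
    (hmonic : P.Monic) (hP : P ∣ X ^ Fintype.card F - X)
    (hsq : ∀ x, P.IsRoot x → IsSquare ((derivative P).eval x))
    (hk : 1 ≤ k) (hkP : 2 * k ≤ P.natDegree) :
    HasMDSSelfOrthogonalCode F P.natDegree k := by
  rw [← card_toFinset_roots_of_dvd_X_pow_card_sub_X hP] at hkP ⊢
  refine hasMDSSelfOrthogonalCode_of_isSquare_eval_derivative_nodal _ (fun x hx => ?_) hk hkP
  rw [nodal_toFinset_roots_of_dvd_X_pow_card_sub_X hmonic hP]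
  exact hsq x (isRoot_of_mem_roots (Multiset.mem_toFinset.1 hx))

theorem exists_finset_pow_eq {d s : ℕ} {c : F} (hc : c ^ 2 = 1)
    (hd : 2 * d ∣ Fintype.card F - 1) (hs : s ≤ d) :
    ∃ S : Finset F, S.card = s ∧ ∀ y ∈ S, y ^ d = c := by
  classical
  have hdvd : (X ^ d - C c : F[X]) ∣ X ^ Fintype.card F - X := by
    refine Dvd.dvd.trans ?_ (X_pow_sub_one_dvd_X_pow_card_sub_X hd)
    have hfactor := sub_dvd_pow_sub_pow (X ^ d : F[X]) (C c) 2
    rwa [← pow_mul, mul_comm d, ← C_pow, hc, C_1] at hfactor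
  have hcard := card_toFinset_roots_of_dvd_X_pow_card_sub_X hdvd
  rw [natDegree_X_pow_sub_C] at hcard
  obtain ⟨S, hS, hSs⟩ := Finset.exists_subset_card_eq (hs.trans_eq hcard.symm)
  refine ⟨S, hSs, fun y hy => ?_⟩
  have hroot := isRoot_of_mem_roots (Multiset.mem_toFinset.1 (hS hy))
  simpa [sub_eq_zero] using hroot

end RootsInFiniteField

section RootNodal

variable {F : Type*} [Field F] {f : ℕ} {S : Finset F}

/-- The polynomial `∏ y ∈ S, (X ^ f - y)`, whose roots are the `f`-th roots of the elements
of `S`. -/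
noncomputable def rootNodal (f : ℕ) (S : Finset F) : F[X] :=
  expand F f (Lagrange.nodal S id)

theorem monic_rootNodal (hf : 0 < f) : (rootNodal f S).Monic :=
  Lagrange.nodal_monic.expand hf

theorem natDegree_rootNodal : (rootNodal f S).natDegree = S.card * f := by
  rw [rootNodal, natDegree_expand, Lagrange.natDegree_nodal]

theorem eval_rootNodal (x : F) : (rootNodal f S).eval x = ∏ y ∈ S, (x ^ f - y) := by
  rw [rootNodal, expand_eval, Lagrange.eval_nodal]
  rfl

theorem isRoot_rootNodal {x : F} : (rootNodal f S).IsRoot x ↔ x ^ f ∈ S := by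
  rw [IsRoot.def, eval_rootNodal, Finset.prod_eq_zero_iff]
  simp [sub_eq_zero]

theorem eval_derivative_rootNodal [DecidableEq F] {x : F} (hx : x ^ f ∈ S) :
    (derivative (rootNodal f S)).eval x =
      (∏ y ∈ S.erase (x ^ f), (x ^ f - y)) * (f * x ^ (f - 1)) := by
  have hnodal := Lagrange.eval_nodal_derivative_eval_node_eq (v := id) hx
  rw [Lagrange.eval_nodal] at hnodal
  rw [rootNodal, derivative_expand, eval_mul, expand_eval]
  simpa using congrArg (· * ((f : F) * x ^ (f - 1))) hnodal

theorem rootNodal_dvd_X_pow_sub_C {d : ℕ} {c : F} (hS : ∀ y ∈ S, y ^ d = c) :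
    rootNodal f S ∣ X ^ (f * d) - C c := by
  have hnodal : Lagrange.nodal S id ∣ X ^ d - C c :=
    Finset.prod_dvd_of_coprime ((pairwise_coprime_X_sub_C Function.injective_id).set_pairwise _)
      fun y hy => dvd_iff_isRoot.2 (by simp [hS y hy])
  simpa [rootNodal, pow_mul] using map_dvd (expand F f) hnodal

theorem isSquare_eval_derivative_rootNodal_mul [DecidableEq F] {Q : F[X]} {x : F}
    (hx : x ^ f ∈ S) (hfsq : IsSquare (f : F)) (hxsq : IsSquare x)
    (hprod : IsSquare (∏ y ∈ S.erase (x ^ f), (x ^ f - y))) (hQ : IsSquare (Q.eval x)) :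
    IsSquare ((derivative (rootNodal f S * Q)).eval x) := by
  have hroot : (rootNodal f S).eval x = 0 := isRoot_rootNodal.2 hx
  rw [derivative_mul, eval_add, eval_mul, eval_mul, hroot, zero_mul, add_zero,
    eval_derivative_rootNodal hx]
  exact (hprod.mul (hfsq.mul (hxsq.pow _))).mul hQ

end RootNodal

section Squares

variable {F : Type*} [Field F] {m : ℕ}

/- For `q = (2m + 1) ^ 2` the exponent `2 * (m * (m + 1))` below is `(q - 1) / 2`, the one in
Euler's criterion. -/
theorem pow_eq_of_pow_mul_eq {z w ε : F} (hz : z ≠ 0) (h : z ^ (2 * m + 1) * w = ε * z)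
    (hw : w ^ (m + 1) = 1) : z ^ (2 * (m * (m + 1))) = ε ^ (m + 1) := by
  have hε : z ^ (2 * m) * w = ε := mul_right_cancel₀ hz (by rw [← h]; ring)
  rw [← hε, mul_pow, hw, mul_one, ← pow_mul, mul_assoc]

theorem pow_mul_self_of_pow_eq_one {u : F} (hu : u ^ (m + 1) = 1) : u ^ (2 * m + 1) * u = 1 := by
  rw [← pow_succ, show 2 * m + 1 + 1 = (m + 1) * 2 by ring, pow_mul, hu, one_pow]

variable [Fintype F]

theorem exists_ringHom_eq_pow {r d : ℕ} (hF : Fintype.card F = r ^ d) :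
    ∃ φ : F →+* F, ∀ x, φ x = x ^ r := by
  have hd : d ≠ 0 := by
    rintro rfl
    exact (Fintype.one_lt_card (α := F)).ne' (hF.trans (pow_zero r))
  obtain ⟨p, n, hp, -, rfl⟩ :=
    (isPrimePow_pow_iff hd).1 (hF ▸ FiniteField.isPrimePow_card F)
  have : Fact p.Prime := ⟨hp.nat_prime⟩
  have : CharP F p := charP_of_card_eq_prime_pow (hF.trans (pow_mul p n d).symm)
  exact ⟨iterateFrobenius F p n, iterateFrobenius_def p n⟩

theorem isSquare_iff_pow_eq_one (hF : Fintype.card F = (2 * m + 1) ^ 2) {z : F} (hz : z ≠ 0) :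
    IsSquare z ↔ z ^ (2 * (m * (m + 1))) = 1 := by
  have hcard : Fintype.card F = 4 * (m * (m + 1)) + 1 := by rw [hF]; ring
  have hchar : ringChar F ≠ 2 := fun h => by
    have := FiniteField.even_card_of_char_two h
    lia
  have hhalf : Fintype.card F / 2 = 2 * (m * (m + 1)) := by
    rw [hcard]
    lia
  rw [FiniteField.isSquare_iff hchar hz, hhalf]

theorem isSquare_of_pow_eq_self (hF : Fintype.card F = (2 * m + 1) ^ 2) {z : F}
    (hz : z ^ (2 * m + 1) = z) : IsSquare z := by
  rcases eq_or_ne z 0 with rfl | hz0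
  · exact IsSquare.zero
  · rw [isSquare_iff_pow_eq_one hF hz0,
      pow_eq_of_pow_mul_eq hz0 (w := 1) (ε := 1) (by rw [hz, mul_comm]) (one_pow _), one_pow]

theorem isSquare_natCast (hF : Fintype.card F = (2 * m + 1) ^ 2) (n : ℕ) : IsSquare (n : F) := by
  obtain ⟨φ, hφ⟩ := exists_ringHom_eq_pow hF
  exact isSquare_of_pow_eq_self hF (by rw [← hφ, map_natCast])

theorem isSquare_neg_one (hF : Fintype.card F = (2 * m + 1) ^ 2) : IsSquare (-1 : F) :=
  isSquare_of_pow_eq_self hF (odd_two_mul_add_one m).neg_one_pow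

theorem isSquare_sub_of_pow_eq_self (hF : Fintype.card F = (2 * m + 1) ^ 2) {x y : F}
    (hx : x ^ (2 * m + 1) = x) (hy : y ^ (2 * m + 1) = y) : IsSquare (x - y) := by
  obtain ⟨φ, hφ⟩ := exists_ringHom_eq_pow hF
  exact isSquare_of_pow_eq_self hF (by rw [← hφ, map_sub, hφ, hφ, hx, hy])

theorem isSquare_add_of_pow_eq_one (hF : Fintype.card F = (2 * m + 1) ^ 2) {u v : F}
    (hu : u ^ (m + 1) = 1) (hv : v ^ (m + 1) = 1) : IsSquare (u + v) := by
  obtain ⟨φ, hφ⟩ := exists_ringHom_eq_pow hF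
  rcases eq_or_ne (u + v) 0 with h0 | h0
  · exact h0 ▸ IsSquare.zero
  have hfrob : (u + v) ^ (2 * m + 1) * (u * v) = 1 * (u + v) := by
    rw [← hφ, map_add, hφ, hφ]
    linear_combination
      v * pow_mul_self_of_pow_eq_one hu + u * pow_mul_self_of_pow_eq_one hv
  rw [isSquare_iff_pow_eq_one hF h0,
    pow_eq_of_pow_mul_eq h0 hfrob (by rw [mul_pow, hu, hv, one_mul]), one_pow]

theorem sub_pow_eq_neg_one_pow (hF : Fintype.card F = (2 * m + 1) ^ 2) {u v : F}
    (hu : u ^ (m + 1) = 1) (hv : v ^ (m + 1) = 1) (huv : u ≠ v) :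
    (u - v) ^ (2 * (m * (m + 1))) = (-1) ^ (m + 1) := by
  obtain ⟨φ, hφ⟩ := exists_ringHom_eq_pow hF
  refine pow_eq_of_pow_mul_eq (w := u * v) (sub_ne_zero.2 huv) ?_ (by rw [mul_pow, hu, hv, one_mul])
  rw [← hφ, map_sub, hφ, hφ]
  linear_combination v * pow_mul_self_of_pow_eq_one hu - u * pow_mul_self_of_pow_eq_one hv

theorem isSquare_prod_sub_of_pow_eq_one (hF : Fintype.card F = (2 * m + 1) ^ 2) {u : F}
    {S : Finset F} (hu : u ^ (m + 1) = 1) (hS : ∀ v ∈ S, v ^ (m + 1) = 1) (huS : u ∉ S)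
    (heven : Even ((m + 1) * S.card)) : IsSquare (∏ v ∈ S, (u - v)) := by
  have hne : ∀ v ∈ S, u ≠ v := fun v hv h => huS (h ▸ hv)
  rw [isSquare_iff_pow_eq_one hF
      (Finset.prod_ne_zero_iff.2 fun v hv => sub_ne_zero.2 (hne v hv)), ← Finset.prod_pow,
    Finset.prod_congr rfl fun v hv => sub_pow_eq_neg_one_pow hF hu (hS v hv) (hne v hv),
    Finset.prod_const, ← pow_mul, heven.neg_one_pow]

end Squares

section TwoFamilies

variable {F : Type*} [Field F] {m g d₁ d₂ : ℕ} {U T : Finset F}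

theorem pow_eq_self_of_sq_pow_eq_one {d : ℕ} (hd : d ∣ m) {z : F} (hz : (z ^ d) ^ 2 = 1) :
    z ^ (2 * m + 1) = z := by
  obtain ⟨e, rfl⟩ := hd
  rw [pow_succ, show 2 * (d * e) = d * 2 * e by ring, pow_mul, pow_mul, hz, one_pow, one_mul]

theorem rootNodal_mul_rootNodal_dvd (hU : ∀ u ∈ U, u ^ d₁ = 1) (hT : ∀ v ∈ T, v ^ d₂ = -1) :
    rootNodal (d₂ * g) U * rootNodal (d₁ * g) T ∣ X ^ (2 * (d₁ * d₂ * g)) - 1 := by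
  have hfactor : (X ^ (2 * (d₁ * d₂ * g)) - 1 : F[X]) =
      (X ^ (d₂ * g * d₁) - C 1) * (X ^ (d₁ * g * d₂) - C (-1)) := by
    rw [C_neg, C_1]
    ring
  exact hfactor ▸ mul_dvd_mul (rootNodal_dvd_X_pow_sub_C hU) (rootNodal_dvd_X_pow_sub_C hT)

variable [Fintype F]

theorem isSquare_of_sq_pow_eq_one (hF : Fintype.card F = (2 * m + 1) ^ 2) {d : ℕ}
    (hd : d ∣ m * (m + 1)) {z : F} (hz : (z ^ d) ^ 2 = 1) : IsSquare z := by
  rcases eq_or_ne z 0 with rfl | hz0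
  · exact IsSquare.zero
  obtain ⟨e, he⟩ := hd
  rw [isSquare_iff_pow_eq_one hF hz0, he, show 2 * (d * e) = d * 2 * e by ring, pow_mul, pow_mul,
    hz, one_pow]

theorem isSquare_eval_derivative_of_pow_mem_left (hF : Fintype.card F = (2 * m + 1) ^ 2)
    (hd₁ : d₁ ∣ m + 1) (hd₂ : d₂ ∣ m) (hg : d₁ * d₂ * g ∣ m * (m + 1))
    (hU : ∀ u ∈ U, u ^ d₁ = 1) (hT : ∀ v ∈ T, v ^ d₂ = -1)
    (heven : Even ((m + 1) * (U.card - 1))) {x : F} (hx : x ^ (d₂ * g) ∈ U) :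
    IsSquare ((derivative (rootNodal (d₂ * g) U * rootNodal (d₁ * g) T)).eval x) := by
  classical
  have hpow : x ^ (d₁ * d₂ * g) = 1 := by
    rw [← hU _ hx]
    ring
  have hU' : ∀ u ∈ U, u ^ (m + 1) = 1 := fun u hu => by
    obtain ⟨e, he⟩ := hd₁
    rw [he, pow_mul, hU u hu, one_pow]
  refine isSquare_eval_derivative_rootNodal_mul hx (isSquare_natCast hF _)
    (isSquare_of_sq_pow_eq_one hF hg (by rw [hpow, one_pow])) ?_ ?_
  · refine isSquare_prod_sub_of_pow_eq_one hF (hU' _ hx)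
      (fun u hu => hU' u (Finset.mem_of_mem_erase hu)) (Finset.notMem_erase _ _) ?_
    rwa [Finset.card_erase_of_mem hx]
  · rw [eval_rootNodal]
    refine Finset.isSquare_prod _ fun v hv => isSquare_sub_of_pow_eq_self hF
      (pow_eq_self_of_sq_pow_eq_one hd₂ ?_) (pow_eq_self_of_sq_pow_eq_one hd₂ ?_)
    · rw [← pow_mul x, show d₁ * g * d₂ = d₁ * d₂ * g by ring, hpow, one_pow]
    · rw [hT v hv, neg_one_sq]

theorem isSquare_eval_derivative_of_pow_mem_right (hF : Fintype.card F = (2 * m + 1) ^ 2)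
    (hd₁ : d₁ ∣ m + 1) (hodd : Odd d₁) (hd₂ : d₂ ∣ m) (hg : d₁ * d₂ * g ∣ m * (m + 1))
    (hU : ∀ u ∈ U, u ^ d₁ = 1) (hT : ∀ v ∈ T, v ^ d₂ = -1) {x : F} (hx : x ^ (d₁ * g) ∈ T) :
    IsSquare ((derivative (rootNodal (d₂ * g) U * rootNodal (d₁ * g) T)).eval x) := by
  classical
  have hpow : x ^ (d₁ * d₂ * g) = -1 := by
    rw [← hT _ hx]
    ring
  have hT' : ∀ v ∈ T, v ^ (2 * m + 1) = v := fun v hv =>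
    pow_eq_self_of_sq_pow_eq_one hd₂ (by rw [hT v hv, neg_one_sq])
  rw [mul_comm]
  refine isSquare_eval_derivative_rootNodal_mul hx (isSquare_natCast hF _)
    (isSquare_of_sq_pow_eq_one hF hg (by rw [hpow, neg_one_sq]))
    (Finset.isSquare_prod _ fun v hv =>
      isSquare_sub_of_pow_eq_self hF (hT' _ hx) (hT' v (Finset.mem_of_mem_erase hv))) ?_
  -- As `d₁` is odd, `-x ^ (d₂ * g)` is a `d₁`-th root of unity, so each difference
  -- `x ^ (d₂ * g) - u` is minus a sum of two such roots.
  have hpow_neg : (-x ^ (d₂ * g)) ^ d₁ = 1 := by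
    rw [hodd.neg_pow, ← pow_mul, show d₂ * g * d₁ = d₁ * d₂ * g by ring, hpow, neg_neg]
  obtain ⟨e, he⟩ := hd₁
  have hcircle : ∀ z : F, z ^ d₁ = 1 → z ^ (m + 1) = 1 := fun z hz => by
    rw [he, pow_mul, hz, one_pow]
  rw [eval_rootNodal]
  refine Finset.isSquare_prod _ fun u hu => ?_
  rw [show x ^ (d₂ * g) - u = -1 * (-x ^ (d₂ * g) + u) by ring]
  exact (isSquare_neg_one hF).mul
    (isSquare_add_of_pow_eq_one hF (hcircle _ hpow_neg) (hcircle u (hU u hu)))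

theorem hasMDSSelfOrthogonalCode_of_dvd [DecidableEq F] {s t k : ℕ}
    (hF : Fintype.card F = (2 * m + 1) ^ 2)
    (hd₁ : d₁ ∣ m + 1) (hodd : Odd d₁) (hd₂ : d₂ ∣ m) (hg : d₁ * d₂ * g ∣ m * (m + 1))
    (hs : s ≤ d₁) (ht : t ≤ d₂) (heven : Even ((m + 1) * (s - 1)))
    (hk : 1 ≤ k) (hkn : 2 * k ≤ s * (d₂ * g) + t * (d₁ * g)) :
    HasMDSSelfOrthogonalCode F (s * (d₂ * g) + t * (d₁ * g)) k := by
  have hcard : Fintype.card F - 1 = 4 * (m * (m + 1)) := by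
    rw [hF]
    exact Nat.sub_eq_of_eq_add (by ring)
  have hdvd : ∀ d, d ∣ m * (m + 1) → 2 * d ∣ Fintype.card F - 1 := fun d hd => by
    rw [hcard]
    exact mul_dvd_mul (by norm_num) hd
  have hm : 0 < m * (m + 1) := by
    have := Fintype.one_lt_card (α := F)
    lia
  obtain ⟨⟨hd₁pos, hd₂pos⟩, hgpos⟩ : (0 < d₁ ∧ 0 < d₂) ∧ 0 < g := by
    simpa only [CanonicallyOrderedAdd.mul_pos] using Nat.pos_of_dvd_of_pos hg hm
  obtain ⟨U, rfl, hU⟩ := exists_finset_pow_eq (F := F) (one_pow 2) (hdvd _ (hd₁.mul_left m)) hs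
  obtain ⟨T, rfl, hT⟩ := exists_finset_pow_eq (F := F) neg_one_sq (hdvd _ (hd₂.mul_right _)) ht
  have hmonicU : (rootNodal (d₂ * g) U).Monic := monic_rootNodal (mul_pos hd₂pos hgpos)
  have hmonicT : (rootNodal (d₁ * g) T).Monic := monic_rootNodal (mul_pos hd₁pos hgpos)
  rw [← natDegree_rootNodal, ← natDegree_rootNodal, ← hmonicU.natDegree_mul hmonicT] at hkn ⊢
  refine hasMDSSelfOrthogonalCode_of_isSquare_eval_derivative (hmonicU.mul hmonicT)
    ((rootNodal_mul_rootNodal_dvd hU hT).trans (X_pow_sub_one_dvd_X_pow_card_sub_X (hdvd _ hg)))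
    (fun x hx => ?_) hk hkn
  rcases root_mul.1 hx with hxU | hxT
  · exact isSquare_eval_derivative_of_pow_mem_left hF hd₁ hd₂ hg hU hT heven
      (isRoot_rootNodal.1 hxU)
  · exact isSquare_eval_derivative_of_pow_mem_right hF hd₁ hodd hd₂ hg hU hT
      (isRoot_rootNodal.1 hxT)

end TwoFamilies

section Parameters

variable {d₁ d₂ G m : ℕ}

theorem odd_of_mul_mod_two_pow {l : ℕ} (hG : 2 ^ l ∣ G)
    (h : d₁ * G % 2 ^ (l + 1) = 2 ^ l) : Odd d₁ := by
  by_contra hd₁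
  have hdvd : 2 ^ (l + 1) ∣ d₁ * G := by
    rw [pow_succ']
    exact mul_dvd_mul (Nat.not_odd_iff_even.1 hd₁).two_dvd hG
  exact (Nat.two_pow_pos l).ne (h ▸ (Nat.mod_eq_zero_of_dvd hdvd).symm)

theorem exists_eq_mul_of_coprime_of_mul_eq {f₁ f₂ c : ℕ} (hcop : d₁.Coprime d₂)
    (hd₁ : 0 < d₁) (hc : 0 < c) (hG : c ∣ G) (hG0 : 0 < G) (h₁ : c * m = d₁ * G * f₁)
    (h₂ : c * m = d₂ * G * f₂) : ∃ g, f₁ = d₂ * g ∧ f₂ = d₁ * g ∧ d₁ * d₂ * g ∣ m := by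
  have hf : d₁ * f₁ = d₂ * f₂ := Nat.eq_of_mul_eq_mul_left hG0 (by linear_combination h₂ - h₁)
  obtain ⟨g, rfl⟩ := hcop.dvd_of_dvd_mul_left (hf ▸ dvd_mul_right d₁ f₁)
  obtain rfl : f₁ = d₂ * g := Nat.eq_of_mul_eq_mul_left hd₁ (by rw [hf]; ring)
  obtain ⟨b, rfl⟩ := hG
  exact ⟨g, rfl, rfl, b, Nat.eq_of_mul_eq_mul_left hc (by rw [h₁]; ring)⟩

theorem dvd_of_coprime_of_two_mul_dvd (hcop : d₁.Coprime d₂) (hG : 0 < G)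
    (h : 2 * (d₂ * G) ∣ d₁ * G * (2 * m)) : d₂ ∣ m := by
  refine hcop.symm.dvd_of_dvd_mul_left (Nat.dvd_of_mul_dvd_mul_right (k := 2 * G) (by lia) ?_)
  convert h using 1 <;> ring

theorem dvd_of_coprime_of_odd_of_dvd (hcop : d₁.Coprime d₂) (hodd : Odd d₁) (hG : 0 < G)
    (h : d₁ * G ∣ d₂ * G * (2 * m)) : d₁ ∣ m := by
  refine (hcop.mul_right hodd.coprime_two_right).dvd_of_dvd_mul_left
    (Nat.dvd_of_mul_dvd_mul_right hG ?_)
  convert h using 1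
  ring

end Parameters

theorem mds_self_orthogonal_even_length_general {r e1 f1 e2 f2 s t l k : ℕ} (hr_odd : Odd r)
    (hq1 : r ^ 2 - 1 = e1 * f1) (hq2 : r ^ 2 - 1 = e2 * f2)
    (hl : 2 ≤ l) (he1 : e1 % 2 ^ (l + 1) = 2 ^ l) (he2 : 2 ^ l ∣ e2)
    (hdvd1 : 2 * e2 ∣ e1 * (r - 1)) (hdvd2 : e1 ∣ e2 * (r + 1))
    (hs : s ≤ e1 / Nat.gcd e1 e2) (ht : t ≤ e2 / Nat.gcd e1 e2) (h4 : 4 ∣ (s - 1) * (r + 1))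
    {F : Type*} [Field F] [Fintype F] [DecidableEq F] (hF : Fintype.card F = r ^ 2)
    (hk : 1 ≤ k) (hkn : 2 * k ≤ s * f1 + t * f2) :
    HasMDSSelfOrthogonalCode F (s * f1 + t * f2) k := by
  obtain ⟨m, rfl⟩ := hr_odd
  have hq : (2 * m + 1) ^ 2 - 1 = 4 * (m * (m + 1)) := Nat.sub_eq_of_eq_add (by ring)
  have he1_ne : e1 ≠ 0 := by
    rintro rfl
    exact (Nat.two_pow_pos l).ne (by simpa using he1)
  have hl_dvd : 2 ^ l ∣ e1.gcd e2 :=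
    Nat.dvd_gcd ((Nat.dvd_mod_iff (pow_dvd_pow 2 l.le_succ)).1 (he1 ▸ dvd_rfl)) he2
  obtain ⟨G, d₁, d₂, hG, hcop, rfl, rfl⟩ :=
    Nat.exists_coprime' (Nat.gcd_pos_of_pos_left e2 (Nat.pos_of_ne_zero he1_ne))
  rw [Nat.gcd_mul_right, hcop, one_mul] at hl_dvd hs ht
  rw [Nat.mul_div_cancel _ hG] at hs ht
  have hodd : Odd d₁ := odd_of_mul_mod_two_pow hl_dvd he1
  have h4G : 4 ∣ G := (pow_dvd_pow 2 hl).trans hl_dvd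
  obtain ⟨g, rfl, rfl, hg⟩ := exists_eq_mul_of_coprime_of_mul_eq hcop hodd.pos four_pos h4G hG
    (hq ▸ hq1) (hq ▸ hq2)
  have hd₂ : d₂ ∣ m := dvd_of_coprime_of_two_mul_dvd hcop hG hdvd1
  have hd₁ : d₁ ∣ m + 1 := dvd_of_coprime_of_odd_of_dvd hcop hodd hG hdvd2
  have heven : Even ((m + 1) * (s - 1)) := by
    refine even_iff_two_dvd.2 (Nat.dvd_of_mul_dvd_mul_left two_pos ?_)
    convert h4 using 1 <;> ring
  exact hasMDSSelfOrthogonalCode_of_dvd hF hd₁ hodd hd₂ hg hs ht heven hk hkn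

/-- Theorem 5.1(1): if `n₁ = s·f₁ + t·f₂` is even, then for `1 ≤ k ≤ n₁/2 − 1` there is a
`q`-ary `[n₁, k]` MDS self-orthogonal code, where `q = r²`. -/
theorem mds_self_orthogonal_even_length
    (r e1 f1 e2 f2 s t l : ℕ)
    (hr_odd : Odd r) (hr_pp : IsPrimePow r)
    (hq1 : r ^ 2 - 1 = e1 * f1) (hq2 : r ^ 2 - 1 = e2 * f2)
    (hl : 2 ≤ l) (he1 : e1 % 2 ^ (l + 1) = 2 ^ l) (he2 : 2 ^ l ∣ e2)
    (hdvd1 : 2 * e2 ∣ e1 * (r - 1)) (hdvd2 : e1 ∣ e2 * (r + 1))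
    (hs1 : 1 ≤ s) (hs2 : s ≤ e1 / Nat.gcd e1 e2)
    (ht1 : 1 ≤ t) (ht2 : t ≤ e2 / Nat.gcd e1 e2)
    (h4 : 4 ∣ (s - 1) * (r + 1))
    (hn1 : Even (s * f1 + t * f2))
    (F : Type*) [Field F] [Fintype F] [DecidableEq F]
    (hF : Fintype.card F = r ^ 2) :
    ∀ k : ℕ, 1 ≤ k → k ≤ (s * f1 + t * f2) / 2 - 1 →
      ∃ C : Submodule F (Fin (s * f1 + t * f2) → F),
        Module.finrank F C = k ∧
        C ≤ dualCode C ∧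
        IsMinDist C (s * f1 + t * f2 - k + 1) := by
  intro k hk1 hk2
  exact mds_self_orthogonal_even_length_general hr_odd hq1 hq2 hl he1 he2 hdvd1 hdvd2 hs2 ht2 h4
    hF hk1 (by lia)
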